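/- Let k > 10 be an integer and define w_k : ℝ → ℝ by w_k(θ) = 2 cos(kθ) + (π²/3) cos((k−2)θ) + (2/(1−2^{1−2k})) ∑_{m=0}^{k−4} cos((k−4−2m)θ), where the sum ∑_{m=0}^{k−4} cos((k−4−2m)θ) is the continuous extension of sin((k−3)θ)/sin θ. Then w_k is an alternating function of order 2k on (−π, π) with oscillation distance 0.3; that is, there exist points −π < p_1 < p_2 < … < p_{2k+1} < π such that |w_k(p_i)| > 0.3 for each i and w_k(p_i)·w_k(p_{i+1}) < 0 for each i ∈ {1,…,2k}. -/

import Mathlib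

/-- The trigonometric polynomial
`w_k(θ) = 2 cos(kθ) + (π²/3) cos((k−2)θ) + (2/(1−2^{1−2k})) ∑_{m=0}^{k−4} cos((k−4−2m)θ)`,
where the last sum is the continuous extension of `sin((k−3)θ)/sin θ`. -/
noncomputable def wfun (k : ℕ) (θ : ℝ) : ℝ :=
  2 * Real.cos (k * θ) + Real.pi ^ 2 / 3 * Real.cos (((k : ℝ) - 2) * θ)
  + 2 / (1 - (2 : ℝ) ^ (1 - 2 * (k : ℤ))) *
      ∑ m ∈ Finset.range (k - 3), Real.cos (((k : ℝ) - 4 - 2 * m) * θ)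

lemma aux_sum (a θ : ℝ) (n : ℕ) :
    2 * Real.sin θ * ∑ m ∈ Finset.range n, Real.cos ((a - 2 * m) * θ)
      = Real.sin ((a + 1) * θ) - Real.sin ((a + 1 - 2 * n) * θ) := by
  induction n with
  | zero => simp
  | succ n ih =>
    rw [Finset.sum_range_succ, mul_add, ih]
    have e1 : (a + 1 - 2 * (n : ℝ)) * θ = (a - 2 * n) * θ + θ := by ring
    have e2 : (a + 1 - 2 * ((n + 1 : ℕ) : ℝ)) * θ = (a - 2 * n) * θ - θ := by push_cast; ring
    rw [e1, e2, Real.sin_add, Real.sin_sub]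
    ring

noncomputable def gfun (θ : ℝ) : ℂ :=
  ⟨(Real.pi ^ 2 / 3 - 4) * Real.cos (2 * θ),
   -(Real.cos θ / Real.sin θ) * (Real.pi ^ 2 / 3 - 2 + (4 - Real.pi ^ 2 / 3) * Real.cos (2 * θ))⟩

lemma aux_c1 : 3.28 < Real.pi ^ 2 / 3 := by
  have := Real.pi_gt_d4
  nlinarith
lemma aux_c2 : Real.pi ^ 2 / 3 < 3.3 := by
  have := Real.pi_lt_d4
  have := Real.pi_pos
  nlinarith

lemma aux_w0 (k : ℕ) (hk : 10 < k) (θ : ℝ) (hs : Real.sin θ ≠ 0) :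
    2 * Real.cos (k * θ) + Real.pi ^ 2 / 3 * Real.cos (((k : ℝ) - 2) * θ)
    + 2 * ∑ m ∈ Finset.range (k - 3), Real.cos (((k : ℝ) - 4 - 2 * m) * θ)
    = Real.cos (k * θ) * (gfun θ).re - Real.sin (k * θ) * (gfun θ).im := by
  have h := aux_sum ((k : ℝ) - 4) θ (k - 3)
  rw [Nat.cast_sub (by omega)] at h
  have e1 : ((k : ℝ) - 4 + 1) * θ = k * θ - (2 * θ + θ) := by ring
  have e2 : ((k : ℝ) - 4 + 1 - 2 * ((k : ℝ) - (3 : ℕ))) * θ = -(k * θ - (2 * θ + θ)) := by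
    push_cast; ring
  have e3 : ((k : ℝ) - 2) * θ = k * θ - 2 * θ := by ring
  rw [e1, e2, Real.sin_neg] at h
  rw [e3]
  set S := ∑ m ∈ Finset.range (k - 3), Real.cos (((k : ℝ) - 4 - 2 * m) * θ)
  have hS : S = Real.sin (k * θ - (2 * θ + θ)) / Real.sin θ := by
    rw [eq_div_iff hs]; linarith
  rw [hS]
  simp only [gfun]
  rw [Real.sin_sub, Real.cos_sub, Real.sin_add, Real.cos_add, Real.sin_two_mul, Real.cos_two_mul]
  have hp := Real.sin_sq_add_cos_sq θ
  set s := Real.sin θ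
  set c := Real.cos θ
  have hs2 : s ^ 2 = 1 - c ^ 2 := by linarith
  field_simp
  ring_nf
  have hs3 : s ^ 3 = s * (1 - c ^ 2) := by rw [← hs2]; ring
  simp only [hs2, hs3]
  ring

lemma aux_norm (θ : ℝ) (hs : Real.sin θ ≠ 0) : 0.4 < ‖gfun θ‖ := by
  have h1 := aux_c1
  have h2 := aux_c2
  have hn : ‖gfun θ‖ ^ 2 = (gfun θ).re ^ 2 + (gfun θ).im ^ 2 := by
    rw [Complex.sq_norm, Complex.normSq_apply]; ring
  suffices h : (0.16 : ℝ) < ‖gfun θ‖ ^ 2 by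
    have := norm_nonneg (gfun θ)
    nlinarith
  rw [hn]
  simp only [gfun]
  set a := Real.pi ^ 2 / 3
  have hp := Real.sin_sq_add_cos_sq θ
  have hc := Real.cos_two_mul θ
  have hle := Real.cos_le_one (2 * θ)
  set x := Real.cos (2 * θ)
  have hs0 : 0 < Real.sin θ ^ 2 := by positivity
  rcases le_total x (-0.6) with hx | hx
  · have : (0.42 : ℝ) ≤ (a - 4) * x := by nlinarith
    have : (0.16 : ℝ) < ((a - 4) * x) ^ 2 := by nlinarith
    nlinarith [sq_nonneg (-(Real.cos θ / Real.sin θ) * (a - 2 + (4 - a) * x))]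
  · have hA : (0.84 : ℝ) ≤ a - 2 + (4 - a) * x := by nlinarith
    have hA2 : (0.7 : ℝ) ≤ (a - 2 + (4 - a) * x) ^ 2 := by nlinarith
    have hq : (0.25 : ℝ) ≤ (Real.cos θ / Real.sin θ) ^ 2 := by
      rw [div_pow, le_div_iff₀ hs0]; nlinarith
    have : 0.16 < (-(Real.cos θ / Real.sin θ) * (a - 2 + (4 - a) * x)) ^ 2 := by
      rw [mul_pow, neg_sq]; nlinarith
    nlinarith [sq_nonneg ((a - 4) * x)]

lemma aux_pos (θ : ℝ) : 0 < Real.pi ^ 2 / 3 - 2 + (4 - Real.pi ^ 2 / 3) * Real.cos (2 * θ) := by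
  have h1 := aux_c1
  have h2 := aux_c2
  nlinarith [Real.neg_one_le_cos (2 * θ)]

lemma aux_slit (θ : ℝ) (h0 : 0 < θ) (h1 : θ < Real.pi) : gfun θ ∈ Complex.slitPlane := by
  have hs := Real.sin_pos_of_pos_of_lt_pi h0 h1
  rw [Complex.mem_slitPlane_iff]
  by_cases hc : Real.cos θ = 0
  · left
    simp only [gfun, Real.cos_two_mul, hc]
    have := aux_c2
    nlinarith
  · right
    simp only [gfun]
    have := aux_pos θ
    have : Real.cos θ / Real.sin θ ≠ 0 := div_ne_zero hc hs.ne'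
    exact mul_ne_zero (neg_ne_zero.mpr this) (aux_pos θ).ne'

lemma aux_cont : ContinuousOn gfun (Set.Ioo 0 Real.pi) := by
  have : gfun = fun θ => (((Real.pi ^ 2 / 3 - 4) * Real.cos (2 * θ) : ℝ) : ℂ) +
     ((-(Real.cos θ / Real.sin θ) * (Real.pi ^ 2 / 3 - 2 + (4 - Real.pi ^ 2 / 3) * Real.cos (2 * θ)) : ℝ) : ℂ) * Complex.I := by
    funext θ
    apply Complex.ext <;> simp [gfun, -Complex.ofReal_mul, -Complex.ofReal_add, -Complex.ofReal_neg, -Complex.ofReal_div]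
  rw [this]
  have hd : ContinuousOn (fun θ => Real.cos θ / Real.sin θ) (Set.Ioo 0 Real.pi) :=
    Real.continuous_cos.continuousOn.div Real.continuous_sin.continuousOn
      (fun x hx => (Real.sin_pos_of_pos_of_lt_pi hx.1 hx.2).ne')
  have h2 : ContinuousOn (fun θ => -(Real.cos θ / Real.sin θ) * (Real.pi ^ 2 / 3 - 2 + (4 - Real.pi ^ 2 / 3) * Real.cos (2 * θ))) (Set.Ioo 0 Real.pi) :=
    hd.neg.mul (by fun_prop)
  have h3 := Complex.continuous_ofReal.comp_continuousOn h2
  exact ContinuousOn.add (by fun_prop) (h3.mul continuousOn_const)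

lemma aux_ivt (f : ℝ → ℝ) (a b : ℝ) (hab : a ≤ b) (hf : ContinuousOn f (Set.Icc a b)) :
    ∃ q : ℝ → ℝ, (∀ y ∈ Set.Ioo (f a) (f b), q y ∈ Set.Icc a b ∧ f (q y) = y) ∧
      StrictMonoOn q (Set.Ioo (f a) (f b)) := by
  let q : ℝ → ℝ := fun y => sInf (Set.Icc a b ∩ f ⁻¹' {y})
  have hbdd : ∀ y, BddBelow (Set.Icc a b ∩ f ⁻¹' {y}) := fun y => ⟨a, fun t ht => ht.1.1⟩
  have hq : ∀ y ∈ Set.Ioo (f a) (f b), q y ∈ Set.Icc a b ∩ f ⁻¹' {y} := by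
    intro y hy
    have hne : (Set.Icc a b ∩ f ⁻¹' {y}).Nonempty := by
      obtain ⟨t, ht, h⟩ := intermediate_value_Icc hab hf ⟨hy.1.le, hy.2.le⟩
      exact ⟨t, ht, h⟩
    exact (hf.preimage_isClosed_of_isClosed isClosed_Icc isClosed_singleton).csInf_mem hne (hbdd y)
  refine ⟨q, fun y hy => hq y hy, ?_⟩
  intro y hy z hz hyz
  obtain ⟨hz1, hz2⟩ := hq z hz
  have hz2 : f (q z) = z := hz2
  obtain ⟨t, ht, h⟩ := intermediate_value_Icc hz1.1 (hf.mono (Set.Icc_subset_Icc_right hz1.2))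
    (show y ∈ Set.Icc (f a) (f (q z)) from ⟨hy.1.le, by rw [hz2]; exact hyz.le⟩)
  have hne : t ≠ q z := by
    rintro rfl
    exact hyz.ne (h.symm.trans hz2)
  exact lt_of_le_of_lt (csInf_le (hbdd y) ⟨⟨ht.1, ht.2.trans hz1.2⟩, h⟩) (lt_of_le_of_ne ht.2 hne)

lemma aux_eps (k : ℕ) (hk : 10 < k) :
    0 ≤ 2 / (1 - (2 : ℝ) ^ (1 - 2 * (k : ℤ))) - 2 ∧
    (2 / (1 - (2 : ℝ) ^ (1 - 2 * (k : ℤ))) - 2) * k ≤ 0.05 := by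
  have e : (2 : ℝ) ^ (1 - 2 * (k : ℤ)) = 2 * ((1 / 2) ^ k) ^ 2 := by
    rw [zpow_sub₀ (by norm_num), zpow_mul]
    rw [zpow_natCast, zpow_one, show ((2 : ℝ) ^ (2 : ℤ)) = 4 by norm_num]
    rw [← pow_mul, mul_comm k 2, pow_mul]
    rw [show ((1 : ℝ) / 2) ^ 2 = 1 / 4 by norm_num, one_div, inv_pow, div_eq_mul_inv]
  rw [e]
  have hk2 : (k : ℝ) * (1 / 2) ^ k ≤ 1 := by
    have : (k : ℝ) < 2 ^ k := by exact_mod_cast Nat.lt_two_pow_self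
    rw [one_div, inv_pow, ← div_eq_mul_inv, div_le_one (by positivity)]
    exact this.le
  have hu : ((1 : ℝ) / 2) ^ k ≤ 1 / 1024 := by
    calc ((1 : ℝ) / 2) ^ k ≤ (1 / 2) ^ 10 :=
          pow_le_pow_of_le_one (by norm_num) (by norm_num) hk.le
      _ = _ := by norm_num
  have hu0 : (0 : ℝ) < (1 / 2) ^ k := by positivity
  set u : ℝ := (1 / 2) ^ k
  have hd : 1 / 2 < 1 - 2 * u ^ 2 := by nlinarith
  have e2 : 2 / (1 - 2 * u ^ 2) - 2 = 4 * u ^ 2 / (1 - 2 * u ^ 2) := by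
    field_simp; ring
  rw [e2]
  refine ⟨by positivity, ?_⟩
  rw [div_mul_eq_mul_div, div_le_iff₀ (by linarith)]
  nlinarith

lemma aux_close (k : ℕ) (hk : 10 < k) (θ : ℝ) (hs : Real.sin θ ≠ 0) :
    |wfun k θ - (Real.cos (k * θ) * (gfun θ).re - Real.sin (k * θ) * (gfun θ).im)| ≤ 0.05 := by
  rw [← aux_w0 k hk θ hs, wfun]
  obtain ⟨h0, h1⟩ := aux_eps k hk
  set C := 2 / (1 - (2 : ℝ) ^ (1 - 2 * (k : ℤ)))
  set S := ∑ m ∈ Finset.range (k - 3), Real.cos (((k : ℝ) - 4 - 2 * m) * θ) with hS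
  have hSk : |S| ≤ k := by
    calc |S| ≤ ∑ m ∈ Finset.range (k - 3), |Real.cos (((k : ℝ) - 4 - 2 * m) * θ)| :=
          Finset.abs_sum_le_sum_abs _ _
      _ ≤ ∑ m ∈ Finset.range (k - 3), (1 : ℝ) :=
          Finset.sum_le_sum fun m _ => Real.abs_cos_le_one _
      _ ≤ k := by simp
  have e : 2 * Real.cos (k * θ) + Real.pi ^ 2 / 3 * Real.cos (((k : ℝ) - 2) * θ) + C * S -
    (2 * Real.cos (k * θ) + Real.pi ^ 2 / 3 * Real.cos (((k : ℝ) - 2) * θ) + 2 * S) = (C - 2) * S := by ring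
  rw [e, abs_mul, abs_of_nonneg h0]
  exact (mul_le_mul_of_nonneg_left hSk h0).trans h1

lemma aux_even (k : ℕ) (θ : ℝ) : wfun k (-θ) = wfun k θ := by
  simp only [wfun, mul_neg, Real.cos_neg]

lemma aux_zero (k : ℕ) (hk : 10 < k) : 0.3 < wfun k 0 := by
  simp only [wfun, mul_zero, Real.cos_zero]
  have := (aux_eps k hk).1
  have h2 : 0 ≤ 2 / (1 - (2 : ℝ) ^ (1 - 2 * (k : ℤ))) := by linarith
  have h3 : 0 ≤ ∑ m ∈ Finset.range (k - 3), (1 : ℝ) := by positivity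
  have := mul_nonneg h2 h3
  have := aux_c1
  linarith

lemma aux_sign (k : ℕ) (hk : 10 < k) (θ : ℝ) (h0 : 0 < θ) (h1 : θ < Real.pi) (j : ℕ)
    (h : k * θ + Complex.arg (gfun θ) = j * Real.pi) : 0.3 < (-1) ^ j * wfun k θ := by
  have hs := (Real.sin_pos_of_pos_of_lt_pi h0 h1).ne'
  have hc := abs_le.mp (aux_close k hk θ hs)
  have hn := aux_norm θ hs
  have e : Real.cos (k * θ) * (gfun θ).re - Real.sin (k * θ) * (gfun θ).im
      = (-1) ^ j * ‖gfun θ‖ := by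
    rw [← Real.cos_nat_mul_pi, ← h, Real.cos_add]
    have a1 := Complex.norm_mul_cos_arg (gfun θ)
    have a2 := Complex.norm_mul_sin_arg (gfun θ)
    rw [← a1, ← a2]
    simp only [Complex.norm_mul_cos_arg, Complex.norm_mul_sin_arg]
    rw [sub_mul, mul_assoc, mul_assoc, mul_comm (Real.cos (gfun θ).arg), mul_comm (Real.sin (gfun θ).arg), a1, a2]
  rw [e] at hc
  rcases neg_one_pow_eq_or ℝ j with hj | hj <;> rw [hj] at hc ⊢ <;> linarith [hc.1, hc.2]

lemma aux_q (k : ℕ) (hk : 10 < k) : ∃ q : ℕ → ℝ,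
    (∀ j, 1 ≤ j → j ≤ k → 0 < q j ∧ q j < Real.pi ∧ 0.3 < (-1) ^ j * wfun k (q j)) ∧
    (∀ i j, 1 ≤ i → i < j → j ≤ k → q i < q j) := by
  have hpi := Real.pi_pos
  have hkR : (10 : ℝ) < k := by exact_mod_cast hk
  have hk0 : (0 : ℝ) < k := by linarith
  set d := Real.pi / k with hd
  have hd0 : 0 < d := by positivity
  have hkd : k * d = Real.pi := by rw [hd]; field_simp
  have hd1 : 10 * d < Real.pi := by nlinarith
  let Φ : ℝ → ℝ := fun θ => k * θ + Complex.arg (gfun θ)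
  have hΦ : ContinuousOn Φ (Set.Icc d (Real.pi - d / 2)) := by
    intro θ hθ
    have h0 : 0 < θ := by linarith [hθ.1]
    have h1 : θ < Real.pi := by linarith [hθ.2]
    have hg : ContinuousAt gfun θ := aux_cont.continuousAt (Ioo_mem_nhds h0 h1)
    have ha := (Complex.continuousAt_arg (aux_slit θ h0 h1)).comp hg
    exact ((continuousAt_const.mul continuousAt_id).add ha).continuousWithinAt
  have hA : Φ d < Real.pi := by
    have : Complex.arg (gfun d) < 0 := by
      rw [Complex.arg_neg_iff]
      have hc := Real.cos_pos_of_mem_Ioo (x := d) ⟨by linarith, by linarith⟩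
      have hs := Real.sin_pos_of_pos_of_lt_pi hd0 (by linarith)
      simp only [gfun]
      have := mul_pos (div_pos hc hs) (aux_pos d)
      linarith
    show k * d + _ < _
    linarith
  have hB : k * Real.pi < Φ (Real.pi - d / 2) := by
    have hs := Real.sin_pos_of_pos_of_lt_pi (x := d / 2) (by linarith) (by linarith)
    have hc := Real.cos_pos_of_mem_Ioo (x := d / 2) ⟨by linarith, by linarith⟩
    have hc2 := Real.cos_pos_of_mem_Ioo (x := d) ⟨by linarith, by linarith⟩
    have e2 : Real.cos (2 * (Real.pi - d / 2)) = Real.cos d := by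
      rw [show 2 * (Real.pi - d / 2) = 2 * Real.pi - d by ring, Real.cos_two_pi_sub]
    have hre : (gfun (Real.pi - d / 2)).re < 0 := by
      simp only [gfun, e2]
      have := aux_c2
      nlinarith
    have him : 0 < (gfun (Real.pi - d / 2)).im := by
      have := mul_pos (div_pos hc hs) (aux_pos (Real.pi - d / 2))
      simp only [gfun]
      rw [Real.cos_pi_sub, Real.sin_pi_sub, neg_div, neg_neg]
      exact this
    have : Real.pi / 2 < Complex.arg (gfun (Real.pi - d / 2)) := by
      by_contra hcon
      push Not at hcon
      rw [Complex.arg_le_pi_div_two_iff] at hcon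
      rcases hcon with h | h <;> linarith
    show _ < k * (Real.pi - d / 2) + _
    nlinarith
  obtain ⟨q, hq, hm⟩ := aux_ivt Φ d (Real.pi - d / 2) (by linarith) hΦ
  have hmem : ∀ j : ℕ, 1 ≤ j → j ≤ k → (j * Real.pi : ℝ) ∈ Set.Ioo (Φ d) (Φ (Real.pi - d / 2)) := by
    intro j h1 h2
    have h1 : (1 : ℝ) ≤ j := by exact_mod_cast h1
    have h2 : (j : ℝ) ≤ k := by exact_mod_cast h2
    constructor <;> nlinarith
  refine ⟨fun j => q (j * Real.pi), fun j h1 h2 => ?_, fun i j h1 h2 h3 => ?_⟩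
  · obtain ⟨ha, hb⟩ := hq _ (hmem j h1 h2)
    have p0 : 0 < q (j * Real.pi) := by linarith [ha.1]
    have p1 : q (j * Real.pi) < Real.pi := by linarith [ha.2]
    exact ⟨p0, p1, aux_sign k hk _ p0 p1 j hb⟩
  · apply hm (hmem i h1 (by omega)) (hmem j (by omega) h3)
    have : (i : ℝ) < j := by exact_mod_cast h2
    nlinarith

theorem wfun_alternating (k : ℕ) (hk : 10 < k) :
    ∃ p : Fin (2 * k + 1) → ℝ, StrictMono p ∧
      (∀ i, p i ∈ Set.Ioo (-Real.pi) Real.pi) ∧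
      (∀ i, (0.3 : ℝ) < |wfun k (p i)|) ∧
      (∀ i : Fin (2 * k), wfun k (p i.castSucc) * wfun k (p i.succ) < 0) := by
  obtain ⟨q, hq, hm⟩ := aux_q k hk
  have hpi := Real.pi_pos
  let P : ℕ → ℝ := fun n => if n < k then -q (k - n) else if n = k then 0 else q (n - k)
  have hmono : ∀ m n, m < n → n ≤ 2 * k → P m < P n := by
    intro m n hmn hn
    simp only [P]
    split_ifs <;> try omega
    · exact neg_lt_neg (hm _ _ (by omega) (by omega) (by omega))
    · linarith [hq (k - m) (by omega) (by omega)]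
    · linarith [hq (k - m) (by omega) (by omega), hq (n - k) (by omega) (by omega)]
    · linarith [hq (n - k) (by omega) (by omega)]
    · exact hm _ _ (by omega) (by omega) (by omega)
  have hval : ∀ n, n ≤ 2 * k → P n ∈ Set.Ioo (-Real.pi) Real.pi ∧
      0.3 < (-1) ^ (n + k) * wfun k (P n) := by
    intro n hn
    simp only [P]
    split_ifs with h1 h2
    · obtain ⟨a, b, c⟩ := hq (k - n) (by omega) (by omega)
      refine ⟨⟨by linarith, by linarith⟩, ?_⟩
      rw [aux_even, show n + k = (k - n) + 2 * n by omega, pow_add, pow_mul]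
      simpa using c
    · subst h2
      refine ⟨⟨by linarith, by linarith⟩, ?_⟩
      rw [← two_mul, pow_mul]
      simpa using aux_zero n hk
    · obtain ⟨a, b, c⟩ := hq (n - k) (by omega) (by omega)
      refine ⟨⟨by linarith, by linarith⟩, ?_⟩
      rw [show n + k = (n - k) + 2 * k by omega, pow_add, pow_mul]
      simpa using c
  refine ⟨fun i => P i, fun i j hij => hmono _ _ hij (by omega), fun i => (hval i (by omega)).1,
    fun i => ?_, fun i => ?_⟩
  · have := (hval i (by omega)).2
    refine this.trans_le ((le_abs_self _).trans ?_)
    rw [abs_mul, abs_pow]; simp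
  · have h1 := (hval i (by omega)).2
    have h2 := (hval (i + 1) (by omega)).2
    simp only [Fin.val_castSucc, Fin.val_succ]
    rw [show (i : ℕ) + 1 + k = (i + k) + 1 by ring, pow_succ] at h2
    rcases neg_one_pow_eq_or ℝ ((i : ℕ) + k) with hj | hj <;> rw [hj] at h1 h2 <;> nlinarith
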